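/- arXiv:2010.05560 — 3 statements merged into one kernel-verified Lean document; each statement's English description precedes it below -/
import Mathlib

section
/- Let A₁,…,A_N be n×n complex matrices. The following are equivalent: (1) for every polynomial p(t₁,…,t_N) in N non-commuting variables and every pair of indices r, s ∈ {1,…,N}, the matrix p(A₁,…,A_N)(A_r A_s − A_s A_r) is nilpotent; (2) there exists a unitary matrix U such that U* A_r U is upper triangular for every r = 1,…,N. -/
open Matrix

noncomputable section

/-- A linear map intertwining two families of endomorphisms intertwines every noncommutative
polynomial in them. -/
theorem FreeAlgebra.lift_apply_of_intertwine {R X V W : Type*} [CommRing R]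
    [AddCommGroup V] [Module R V] [AddCommGroup W] [Module R W]
    {f : X → Module.End R V} {g : X → Module.End R W} (q : V →ₗ[R] W)
    (h : ∀ r x, g r (q x) = q (f r x)) (P : FreeAlgebra R X) (x : V) :
    FreeAlgebra.lift R g P (q x) = q (FreeAlgebra.lift R f P x) := by
  induction P using FreeAlgebra.induction generalizing x with
  | grade0 c => simp [Module.algebraMap_end_apply]
  | grade1 r => simpa using h r x
  | mul a b ha hb => simp [ha, hb]
  | add a b ha hb => simp [ha, hb]

/-- If every `p(f) * [f r, f s]` is nilpotent, then the family `f` has a common eigenvector. -/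
theorem exists_common_eigenvector_of_isNilpotent_mul_commutator {K X V : Type*} [Field K]
    [IsAlgClosed K] [AddCommGroup V] [Module K V] [FiniteDimensional K V] [Nontrivial V]
    (f : X → Module.End K V)
    (hf : ∀ (P : FreeAlgebra K X) (r s : X),
      IsNilpotent (FreeAlgebra.lift K f P * (f r * f s - f s * f r))) :
    ∃ v : V, v ≠ 0 ∧ ∀ r, ∃ μ : K, f r v = μ • v := by
  obtain ⟨W, ⟨hW0, hWf⟩, hmin⟩ := (wellFounded_lt (α := Submodule K V)).has_min
    {W | W ≠ ⊥ ∧ ∀ r, ∀ x ∈ W, f r x ∈ W} ⟨⊤, top_ne_bot, fun _ _ _ => trivial⟩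
  have eq_of_le : ∀ W' : Submodule K V, W' ≤ W → W' ≠ ⊥ → (∀ r, ∀ x ∈ W', f r x ∈ W') →
      W' = W := fun W' hle h0 hinv =>
    hle.eq_of_not_lt (hmin W' ⟨h0, hinv⟩)
  have lift_mem : ∀ (P : FreeAlgebra K X), ∀ x ∈ W, FreeAlgebra.lift K f P x ∈ W := by
    intro P
    induction P using FreeAlgebra.induction with
    | grade0 c => intro x hx; simpa [Module.algebraMap_end_apply] using W.smul_mem c hx
    | grade1 r => intro x hx; simpa using hWf r x hx
    | mul a b ha hb => intro x hx; simpa using ha _ (hb x hx)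
    | add a b ha hb => intro x hx; simpa using W.add_mem (ha x hx) (hb x hx)
  have hcomm : ∀ r s, ∀ w ∈ W, f r (f s w) = f s (f r w) := by
    intro r s w hw
    by_contra hne
    set c := f r * f s - f s * f r with hc
    have hcw : c w ≠ 0 := by simpa [hc, sub_eq_zero] using hne
    have hcW : c w ∈ W := by
      simpa [hc] using W.sub_mem (hWf r _ (hWf s w hw)) (hWf s _ (hWf r w hw))
    let orbit : FreeAlgebra K X →ₗ[K] V :=
      (LinearMap.applyₗ (c w)).comp (FreeAlgebra.lift K f).toLinearMap
    have horbit : orbit.range = W := by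
      apply eq_of_le
      · rintro _ ⟨P, rfl⟩
        exact lift_mem P _ hcW
      · intro h
        have h1 : orbit 1 ∈ orbit.range := ⟨1, rfl⟩
        rw [h, Submodule.mem_bot] at h1
        exact hcw (by simpa [orbit] using h1)
      · rintro r _ ⟨P, rfl⟩
        exact ⟨FreeAlgebra.ι K r * P, by simp [orbit]⟩
    obtain ⟨P, hP⟩ : w ∈ orbit.range := horbit ▸ hw
    obtain ⟨k, hk⟩ := hf P r s
    have hfix : ∀ k : ℕ, ((FreeAlgebra.lift K f P * c) ^ k) w = w := by
      intro k
      induction k with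
      | zero => simp
      | succ k ih =>
        rw [pow_succ, Module.End.mul_apply,
          show (FreeAlgebra.lift K f P * c) w = w from hP, ih]
    have hw0 : w = 0 := by simpa [← hc, hfix] using congrArg (fun g : Module.End K V => g w) hk
    exact hcw (by simp [hw0])
  obtain ⟨v, hv, hv0⟩ := W.exists_mem_ne_zero_of_ne_bot hW0
  have : Nontrivial W := Submodule.nontrivial_iff_ne_bot.mpr hW0
  refine ⟨v, hv0, fun r => ?_⟩
  obtain ⟨μ, hμ⟩ := Module.End.exists_eigenvalue ((f r).restrict (hWf r))
  obtain ⟨u, hu⟩ := hμ.exists_hasEigenvector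
  refine ⟨μ, ?_⟩
  have heig : W ⊓ (f r).eigenspace μ = W := by
    apply eq_of_le _ inf_le_left
    · refine (Submodule.ne_bot_iff _).mpr ⟨u, ⟨u.2, ?_⟩, by simpa using hu.2⟩
      simpa using congrArg Subtype.val hu.apply_eq_smul
    · rintro s x ⟨hx, hxμ⟩
      refine ⟨hWf s x hx, ?_⟩
      have hx' : f r x = μ • x := Module.End.mem_eigenspace_iff.mp hxμ
      exact Module.End.mem_eigenspace_iff.mpr (by rw [hcomm r s x hx, hx', map_smul])
  exact Module.End.mem_eigenspace_iff.mp (heig.ge hv).2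

/-- If every `p(f) * [f r, f s]` is nilpotent, then the family `f` is simultaneously upper
triangular in some orthonormal family of full length. -/
theorem exists_orthonormal_triangular_of_isNilpotent_mul_commutator {X : Type*} (n : ℕ) :
    ∀ {E : Type*} [NormedAddCommGroup E] [InnerProductSpace ℂ E] [FiniteDimensional ℂ E]
      (_ : Module.finrank ℂ E = n) (f : X → Module.End ℂ E)
      (_ : ∀ (P : FreeAlgebra ℂ X) (r s : X),
        IsNilpotent (FreeAlgebra.lift ℂ f P * (f r * f s - f s * f r))),
      ∃ b : Fin n → E, Orthonormal ℂ b ∧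
        ∀ r (i j : Fin n), j < i → inner ℂ (b i) (f r (b j)) = 0 := by
  induction n with
  | zero =>
    intro E _ _ _ _ f _
    exact ⟨Fin.elim0, ⟨fun i => i.elim0, fun i => i.elim0⟩, fun _ i => i.elim0⟩
  | succ n ih =>
    intro E _ _ _ hE f hf
    have : Nontrivial E := Module.nontrivial_of_finrank_pos (R := ℂ) (by omega)
    obtain ⟨w, hw0, hw⟩ := exists_common_eigenvector_of_isNilpotent_mul_commutator f hf
    obtain ⟨v, hv1, hv⟩ : ∃ v : E, ‖v‖ = 1 ∧ ∀ r, ∃ μ : ℂ, f r v = μ • v := by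
      refine ⟨((‖w‖⁻¹ : ℝ) : ℂ) • w, by simp [norm_smul, hw0], fun r => ?_⟩
      obtain ⟨μ, hμ⟩ := hw r
      exact ⟨μ, by rw [map_smul, hμ, smul_comm]⟩
    have hv0 : v ≠ 0 := by
      rintro rfl
      simp at hv1
    let F := (ℂ ∙ v)ᗮ
    let q : E →ₗ[ℂ] F := F.orthogonalProjectionOnto.toLinearMap
    have hq : ∀ y : F, q y = y := fun y =>
      Submodule.orthogonalProjectionOnto_mem_subspace_eq_self y
    have hqv : q v = 0 :=
      Submodule.orthogonalProjectionOnto_orthogonalComplement_singleton_eq_zero v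
    have hdecomp : ∀ x : E, ∃ a : ℂ, x = a • v + q x := by
      intro x
      refine ⟨inner ℂ v x, ?_⟩
      have := Submodule.starProjection_add_starProjection_orthogonal (K := ℂ ∙ v) x
      rw [Submodule.starProjection_unit_singleton ℂ hv1] at this
      exact this.symm
    let g : X → Module.End ℂ F := fun r => q ∘ₗ f r ∘ₗ F.subtype
    have hgq : ∀ r x, g r (q x) = q (f r x) := by
      intro r x
      obtain ⟨a, ha⟩ := hdecomp x
      obtain ⟨μ, hμ⟩ := hv r
      conv_rhs => rw [ha]
      simp [g, hμ, hqv]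
    have hg : ∀ (P : FreeAlgebra ℂ X) (r s : X),
        IsNilpotent (FreeAlgebra.lift ℂ g P * (g r * g s - g s * g r)) := by
      intro P r s
      obtain ⟨k, hk⟩ := hf P r s
      refine ⟨k, LinearMap.ext fun y => ?_⟩
      have := FreeAlgebra.lift_apply_of_intertwine q hgq
        ((P * (FreeAlgebra.ι ℂ r * FreeAlgebra.ι ℂ s - FreeAlgebra.ι ℂ s * FreeAlgebra.ι ℂ r)) ^ k) y
      simpa only [map_pow, map_mul, map_sub, FreeAlgebra.lift_ι_apply, hk, hq, map_zero,
        LinearMap.zero_apply] using this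
    have : Fact (Module.finrank ℂ E = n + 1) := ⟨hE⟩
    obtain ⟨b, hb, hbg⟩ := ih (Submodule.finrank_orthogonal_span_singleton hv0) g hg
    have hvF : ∀ y : F, inner ℂ v (y : E) = 0 := fun y =>
      Submodule.mem_orthogonal_singleton_iff_inner_right.mp y.2
    have hFv : ∀ y : F, inner ℂ (y : E) v = 0 := fun y =>
      Submodule.mem_orthogonal_singleton_iff_inner_left.mp y.2
    refine ⟨Fin.cons v fun i => (b i : E), ?_, fun r i j hij => ?_⟩
    · rw [orthonormal_iff_ite] at hb ⊢
      intro i j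
      induction i using Fin.cases with
      | zero =>
        induction j using Fin.cases with
        | zero => simp [hv1]
        | succ j => simp [hvF, (Fin.succ_ne_zero j).symm]
      | succ i =>
        induction j using Fin.cases with
        | zero => simp [hFv]
        | succ j => simpa using hb i j
    · induction i using Fin.cases with
      | zero => exact absurd hij (Fin.not_lt_zero j)
      | succ i =>
        induction j using Fin.cases with
        | zero =>
          obtain ⟨μ, hμ⟩ := hv r
          simp [hμ, hFv]
        | succ j =>
          obtain ⟨a, ha⟩ := hdecomp (f r (b j))
          have := hbg r i j (Fin.succ_lt_succ_iff.mp hij)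
          simp only [Fin.cons_succ]
          rw [ha, inner_add_right, inner_smul_right, hFv, mul_zero, zero_add]
          exact this

theorem Matrix.BlockTriangular.mul_apply_self {R m : Type*} [CommRing R] [Fintype m]
    [LinearOrder m] {M N : Matrix m m R} (hM : M.BlockTriangular id) (hN : N.BlockTriangular id)
    (i : m) : (M * N) i i = M i i * N i i := by
  rw [Matrix.mul_apply]
  refine Finset.sum_eq_single i (fun j _ hj => ?_) (by simp)
  rcases lt_or_gt_of_ne hj with h | h
  · rw [hM h, zero_mul]
  · rw [hN h, mul_zero]

theorem Matrix.BlockTriangular.isNilpotent_of_diag_eq_zero {R m : Type*} [CommRing R] [Fintype m]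
    [LinearOrder m] {M : Matrix m m R} (hM : M.BlockTriangular id) (h0 : ∀ i, M i i = 0) :
    IsNilpotent M := by
  refine ⟨Fintype.card m, ?_⟩
  have h := Matrix.aeval_self_charpoly M
  rw [Matrix.charpoly_of_isUpperTriangular M hM] at h
  simpa [h0] using h

/-- Noncommutative polynomials in upper triangular matrices are upper triangular. -/
theorem FreeAlgebra.blockTriangular_lift {R X m : Type*} [CommRing R] [Fintype m]
    [LinearOrder m] {B : X → Matrix m m R} (hB : ∀ r, (B r).BlockTriangular id)
    (P : FreeAlgebra R X) : (FreeAlgebra.lift R B P).BlockTriangular id := by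
  induction P using FreeAlgebra.induction with
  | grade0 c =>
    rw [AlgHom.commutes, Matrix.algebraMap_eq_diagonal]
    exact blockTriangular_diagonal _
  | grade1 r => simpa using hB r
  | mul a b ha hb => simpa using ha.mul hb
  | add a b ha hb => simpa using ha.add hb

/-- **McCoy.** For `n × n` complex matrices `A₁,…,A_N`, the following are
equivalent: (1) for every polynomial `P` in `N` non-commuting variables and all indices `r, s`,
the matrix `P(A₁,…,A_N)(A_r A_s − A_s A_r)` is nilpotent; (2) there is a unitary `U` such that
`U* A_r U` is upper triangular for every `r`. -/
theorem stmt10 {n N : ℕ} (A : Fin N → Matrix (Fin n) (Fin n) ℂ) :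
    (∀ P : FreeAlgebra ℂ (Fin N), ∀ r s : Fin N,
        IsNilpotent (FreeAlgebra.lift ℂ A P * (A r * A s - A s * A r))) ↔
    (∃ U : Matrix (Fin n) (Fin n) ℂ, Uᴴ * U = 1 ∧
        ∀ r, (Uᴴ * A r * U).BlockTriangular id) := by
  constructor
  · intro h
    let φ := Matrix.toLpLinAlgEquiv (R := ℂ) (n := Fin n) 2
    have hlift : ∀ P, FreeAlgebra.lift ℂ (fun r => φ (A r)) P = φ (FreeAlgebra.lift ℂ A P) := by
      intro P
      refine DFunLike.congr_fun (f := FreeAlgebra.lift ℂ (fun r => φ (A r)))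
        (g := φ.toAlgHom.comp (FreeAlgebra.lift ℂ A)) (FreeAlgebra.hom_ext ?_) P
      ext1 r
      simp
    obtain ⟨b, hb, hbA⟩ := exists_orthonormal_triangular_of_isNilpotent_mul_commutator n
      (finrank_euclideanSpace_fin (𝕜 := ℂ)) (fun r => φ (A r)) (by
        intro P r s
        rw [hlift, ← map_mul, ← map_mul, ← map_sub, ← map_mul]
        exact (h P r s).map φ)
    have hinner : ∀ x y : EuclideanSpace ℂ (Fin n), inner ℂ x y = ∑ k, star (x k) * y k := by
      intro x y
      simp [PiLp.inner_apply, mul_comm]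
    refine ⟨Matrix.of fun i j => b j i, ?_, fun r i j hij => ?_⟩
    · ext i j
      have := orthonormal_iff_ite.mp hb i j
      rw [hinner] at this
      simpa [Matrix.mul_apply, Matrix.one_apply] using this
    · have := hbA r i j hij
      rw [hinner] at this
      rw [Matrix.mul_assoc, Matrix.mul_apply, ← this]
      rfl
  · rintro ⟨U, hU, hA⟩ P r s
    let u : unitary (Matrix (Fin n) (Fin n) ℂ) := ⟨U, hU, mul_eq_one_comm.mp hU⟩
    let φ := (Unitary.conjStarAlgAut ℂ (Matrix (Fin n) (Fin n) ℂ) (star u)).toAlgEquiv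
    have hφ : ∀ M, φ M = Uᴴ * M * U := fun M => Unitary.conjStarAlgAut_star_apply (S := ℂ) u M
    have hlift : φ (FreeAlgebra.lift ℂ A P) = FreeAlgebra.lift ℂ (fun r => φ (A r)) P := by
      refine DFunLike.congr_fun (f := φ.toAlgHom.comp (FreeAlgebra.lift ℂ A))
        (g := FreeAlgebra.lift ℂ (fun r => φ (A r))) (FreeAlgebra.hom_ext ?_) P
      ext1 r
      simp
    have hT : ∀ r, (φ (A r)).BlockTriangular id := fun r => hφ (A r) ▸ hA r
    rw [← IsNilpotent.map_iff φ.injective, map_mul, map_sub, map_mul, map_mul, hlift]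
    have hP := FreeAlgebra.blockTriangular_lift hT P
    have hC := ((hT r).mul (hT s)).sub ((hT s).mul (hT r))
    refine (hP.mul hC).isNilpotent_of_diag_eq_zero fun i => ?_
    rw [hP.mul_apply_self hC, Matrix.sub_apply, (hT r).mul_apply_self (hT s),
      (hT s).mul_apply_self (hT r), mul_comm (φ (A s) i i), sub_self, mul_zero]
end
end

section
/- Let A and B be n×n complex matrices, and let 𝒩 := ⋂_{k,l=1}^{n−1} ker([A^k, B^l]), where [A^k, B^l] = A^k B^l − B^l A^k. Then A and B have a common eigenvector (i.e. there exists a nonzero v ∈ ℂⁿ and scalars λ, μ ∈ ℂ with A v = λ v and B v = μ v) if and only if 𝒩 ≠ {0}; moreover, 𝒩 is invariant under both A and B, and AB x = BA x for every x ∈ 𝒩. -/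
open Matrix

noncomputable section

/-- The Shemesh subspace `𝒩 = ⋂_{k,l=1}^{n−1} ker([A^k, B^l])`. -/
def shemesh {n : ℕ} (A B : Matrix (Fin n) (Fin n) ℂ) : Submodule ℂ (Fin n → ℂ) :=
  ⨅ k ∈ Finset.Icc 1 (n - 1), ⨅ l ∈ Finset.Icc 1 (n - 1),
    LinearMap.ker (A ^ k * B ^ l - B ^ l * A ^ k).mulVecLin

theorem Matrix.pow_mem_span_range_pow {n : ℕ} (A : Matrix (Fin n) (Fin n) ℂ) (k : ℕ) :
    A ^ k ∈ Submodule.span ℂ (Set.range fun j : Fin n => A ^ (j : ℕ)) := by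
  rcases Nat.eq_zero_or_pos n with rfl | hn
  · rw [Subsingleton.elim (A ^ k) 0]
    exact Submodule.zero_mem _
  · have hdeg : (Polynomial.X ^ k %ₘ A.charpoly).natDegree < n := by
      have h := Polynomial.natDegree_modByMonic_lt (Polynomial.X ^ k) A.charpoly_monic
        (fun h => hn.ne' (by simpa [h] using (A.charpoly_natDegree_eq_dim).symm))
      simpa using h
    rw [A.pow_eq_aeval_mod_charpoly k, Polynomial.aeval_eq_sum_range' hdeg]
    exact Submodule.sum_mem _ fun i hi => Submodule.smul_mem _ _
      (Submodule.subset_span ⟨⟨i, Finset.mem_range.1 hi⟩, rfl⟩)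

/-- If `M` commutes at `x` with the powers of `A` of positive exponent below `n`, it commutes at `x`
with all powers of `A`. -/
theorem Matrix.pow_mul_mulVec_eq_of_lt {n : ℕ} {A M : Matrix (Fin n) (Fin n) ℂ} {x : Fin n → ℂ}
    (h : ∀ k ∈ Finset.Icc 1 (n - 1), (A ^ k * M) *ᵥ x = (M * A ^ k) *ᵥ x) (k : ℕ) :
    (A ^ k * M) *ᵥ x = (M * A ^ k) *ᵥ x := by
  have hk := A.pow_mem_span_range_pow k
  generalize A ^ k = P at hk ⊢
  induction hk using Submodule.span_induction with
  | mem P hP =>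
    obtain ⟨j, rfl⟩ := hP
    rcases Nat.eq_zero_or_pos (j : ℕ) with hj | hj
    · simp [hj]
    · exact h j (Finset.mem_Icc.2 ⟨hj, by omega⟩)
  | zero => simp
  | add P Q _ _ hP hQ => simp only [add_mul, mul_add, add_mulVec, hP, hQ]
  | smul c P _ hP => simp only [smul_mul_assoc, mul_smul_comm, smul_mulVec, hP]

theorem mem_shemesh_iff {n : ℕ} {A B : Matrix (Fin n) (Fin n) ℂ} {x : Fin n → ℂ} :
    x ∈ shemesh A B ↔ ∀ k l : ℕ, (A ^ k * B ^ l) *ᵥ x = (B ^ l * A ^ k) *ᵥ x := by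
  have hmem : x ∈ shemesh A B ↔ ∀ k ∈ Finset.Icc 1 (n - 1), ∀ l ∈ Finset.Icc 1 (n - 1),
      (A ^ k * B ^ l) *ᵥ x = (B ^ l * A ^ k) *ᵥ x := by
    simp only [shemesh, Submodule.mem_iInf, LinearMap.mem_ker, mulVecLin_apply, sub_mulVec,
      sub_eq_zero]
  refine hmem.trans ⟨fun h k l => ?_, fun h k _ l _ => h k l⟩
  exact pow_mul_mulVec_eq_of_lt
    (fun k hk => (pow_mul_mulVec_eq_of_lt (fun l hl => (h k hk l hl).symm) l).symm) k

theorem mulVec_left_mem_shemesh {n : ℕ} {A B : Matrix (Fin n) (Fin n) ℂ} {x : Fin n → ℂ}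
    (hx : x ∈ shemesh A B) : A *ᵥ x ∈ shemesh A B := by
  rw [mem_shemesh_iff] at hx ⊢
  intro k l
  have h₁ : (A * B ^ l) *ᵥ x = (B ^ l * A) *ᵥ x := by simpa using hx 1 l
  calc (A ^ k * B ^ l) *ᵥ A *ᵥ x = A ^ k *ᵥ (B ^ l * A) *ᵥ x := by simp [mul_assoc]
    _ = (A ^ (k + 1) * B ^ l) *ᵥ x := by rw [← h₁]; simp [pow_succ, mul_assoc]
    _ = (B ^ l * A ^ k) *ᵥ A *ᵥ x := by rw [hx]; simp [pow_succ, mul_assoc]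

theorem shemesh_comm {n : ℕ} (A B : Matrix (Fin n) (Fin n) ℂ) : shemesh A B = shemesh B A := by
  ext x
  simp only [mem_shemesh_iff]
  exact ⟨fun h k l => (h l k).symm, fun h k l => (h l k).symm⟩

theorem mulVec_right_mem_shemesh {n : ℕ} {A B : Matrix (Fin n) (Fin n) ℂ} {x : Fin n → ℂ}
    (hx : x ∈ shemesh A B) : B *ᵥ x ∈ shemesh A B := by
  rw [shemesh_comm] at hx ⊢
  exact mulVec_left_mem_shemesh hx

theorem mul_mulVec_comm_of_mem_shemesh {n : ℕ} {A B : Matrix (Fin n) (Fin n) ℂ} {x : Fin n → ℂ}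
    (hx : x ∈ shemesh A B) : (A * B) *ᵥ x = (B * A) *ᵥ x := by
  simpa using mem_shemesh_iff.1 hx 1 1

theorem mem_shemesh_of_mulVec_eq_smul {n : ℕ} {A B : Matrix (Fin n) (Fin n) ℂ} {v : Fin n → ℂ}
    {a b : ℂ} (hA : A *ᵥ v = a • v) (hB : B *ᵥ v = b • v) : v ∈ shemesh A B := by
  have hpow : ∀ {M : Matrix (Fin n) (Fin n) ℂ} {c : ℂ}, M *ᵥ v = c • v →
      ∀ k : ℕ, M ^ k *ᵥ v = c ^ k • v := by
    intro M c hM k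
    induction k with
    | zero => simp
    | succ k ih => rw [pow_succ, ← mulVec_mulVec, hM, mulVec_smul, ih, smul_smul, pow_succ']
  refine mem_shemesh_iff.2 fun k l => ?_
  rw [← mulVec_mulVec, ← mulVec_mulVec, hpow hA, hpow hB, mulVec_smul, mulVec_smul, hpow hA,
    hpow hB, smul_comm]

/-- An invariant nonzero subspace contains an eigenvector. -/
theorem Submodule.exists_mulVec_eq_smul {n : ℕ} {M : Matrix (Fin n) (Fin n) ℂ}
    {W : Submodule ℂ (Fin n → ℂ)} (hW : W ≠ ⊥) (hM : ∀ x ∈ W, M *ᵥ x ∈ W) :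
    ∃ v ∈ W, v ≠ 0 ∧ ∃ c : ℂ, M *ᵥ v = c • v := by
  have : Nontrivial W := Submodule.nontrivial_iff_ne_bot.2 hW
  obtain ⟨c, hc⟩ := Module.End.exists_eigenvalue (M.mulVecLin.restrict hM)
  obtain ⟨v, hv⟩ := hc.exists_hasEigenvector
  exact ⟨v, v.2, fun h => hv.2 (Subtype.ext h), c, congrArg Subtype.val hv.apply_eq_smul⟩

theorem exists_common_eigenvector_of_shemesh_ne_bot {n : ℕ} {A B : Matrix (Fin n) (Fin n) ℂ}
    (h : shemesh A B ≠ ⊥) :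
    ∃ v : Fin n → ℂ, v ≠ 0 ∧ ∃ a b : ℂ, A *ᵥ v = a • v ∧ B *ᵥ v = b • v := by
  obtain ⟨u, hu, hu0, a, ha⟩ :=
    Submodule.exists_mulVec_eq_smul h fun x hx => mulVec_left_mem_shemesh hx
  let W := shemesh A B ⊓ Module.End.eigenspace A.mulVecLin a
  have hW : ∀ {x}, x ∈ W ↔ x ∈ shemesh A B ∧ A *ᵥ x = a • x := by
    simp [W]
  obtain ⟨v, hv, hv0, b, hb⟩ := Submodule.exists_mulVec_eq_smul (W := W) (M := B)
    (Submodule.ne_bot_iff _ |>.2 ⟨u, hW.2 ⟨hu, ha⟩, hu0⟩) (fun x hx => by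
      obtain ⟨hx, hxa⟩ := hW.1 hx
      refine hW.2 ⟨mulVec_right_mem_shemesh hx, ?_⟩
      rw [mulVec_mulVec, mul_mulVec_comm_of_mem_shemesh hx, ← mulVec_mulVec, hxa, mulVec_smul])
  exact ⟨v, hv0, a, b, (hW.1 hv).2, hb⟩

/-- **Shemesh.** `A` and `B` have a common eigenvector iff `𝒩 ≠ {0}`; moreover
`𝒩` is invariant under `A` and `B`, and `A` and `B` commute on `𝒩`. -/
theorem stmt12 {n : ℕ} (A B : Matrix (Fin n) (Fin n) ℂ) :
    ((∃ v : Fin n → ℂ, v ≠ 0 ∧ ∃ lam mu : ℂ, A.mulVec v = lam • v ∧ B.mulVec v = mu • v) ↔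
      shemesh A B ≠ ⊥) ∧
    (∀ x ∈ shemesh A B, A.mulVec x ∈ shemesh A B ∧ B.mulVec x ∈ shemesh A B) ∧
    (∀ x ∈ shemesh A B, (A * B).mulVec x = (B * A).mulVec x) := by
  refine ⟨⟨?_, exists_common_eigenvector_of_shemesh_ne_bot⟩,
    fun x hx => ⟨mulVec_left_mem_shemesh hx, mulVec_right_mem_shemesh hx⟩,
    fun x hx => mul_mulVec_comm_of_mem_shemesh hx⟩
  rintro ⟨v, hv, a, b, hA, hB⟩
  exact (Submodule.ne_bot_iff _).2 ⟨v, mem_shemesh_of_mulVec_eq_smul hA hB, hv⟩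
end
end

section
/- Let A and B be n×n complex matrices such that the commutator AB − BA has rank 1 (a Laffey pair). Then A and B partially commute but do not commute: there exists a nonzero vector v ∈ ℂⁿ and scalars λ, μ ∈ ℂ with A v = λ v and B v = μ v, while AB ≠ BA. -/
open Matrix

noncomputable section

/-- An endomorphism of a finite-dimensional space over an algebraically closed field has an
eigenvector in every nonzero invariant subspace. -/
theorem Module.End.exists_eigenvector_mem {K V : Type*} [Field K] [IsAlgClosed K]
    [AddCommGroup V] [Module K V] [FiniteDimensional K V] (f : Module.End K V)
    {W : Submodule K V} (hW : W ≠ ⊥) (hf : ∀ x ∈ W, f x ∈ W) :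
    ∃ v ∈ W, v ≠ 0 ∧ ∃ c : K, f v = c • v := by
  have : Nontrivial W := Submodule.nontrivial_iff_ne_bot.2 hW
  obtain ⟨c, hc⟩ := Module.End.exists_eigenvalue (f.restrict hf)
  obtain ⟨v, hv⟩ := hc.exists_hasEigenvector
  exact ⟨v, v.2, by simpa using hv.2, c, by simpa using congrArg Subtype.val hv.apply_eq_smul⟩

/-- If the values of the commutator of `f` and `g` lie on a line, then `f` and `g` have a common
eigenvector in every nonzero subspace invariant under both. -/
theorem Module.End.exists_common_eigenvector_mem {K V : Type*} [Field K] [IsAlgClosed K]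
    [AddCommGroup V] [Module K V] [FiniteDimensional K V] (f g : Module.End K V) (u : V)
    (hu : ∀ x, ∃ c : K, c • u = f (g x) - g (f x)) (W : Submodule K V) (hW : W ≠ ⊥)
    (hf : ∀ x ∈ W, f x ∈ W) (hg : ∀ x ∈ W, g x ∈ W) :
    ∃ v ∈ W, v ≠ 0 ∧ ∃ a b : K, f v = a • v ∧ g v = b • v := by
  induction h : Module.finrank K W using Nat.strong_induction_on generalizing W with
  | _ d ih =>
  obtain ⟨w, hwW, hw0, a, hwa⟩ := f.exists_eigenvector_mem hW hf
  by_cases hker : ∀ x ∈ W, f x = a • x → f (g x) = g (f x)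
  · obtain ⟨v, hv, hv0, b, hvb⟩ := g.exists_eigenvector_mem (W := W ⊓ f.eigenspace a)
      (fun hbot => hw0 <| (Submodule.mem_bot K).1 <|
        hbot ▸ Submodule.mem_inf.2 ⟨hwW, Module.End.mem_eigenspace_iff.2 hwa⟩)
      (fun x ⟨hxW, hx⟩ => by
        have hx' := Module.End.mem_eigenspace_iff.1 hx
        exact ⟨hg x hxW, Module.End.mem_eigenspace_iff.2 (by
          rw [hker x hxW hx', hx', map_smul])⟩)
    exact ⟨v, hv.1, hv0, a, b, Module.End.mem_eigenspace_iff.1 hv.2, hvb⟩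
  · push Not at hker
    obtain ⟨x, hxW, hxa, hx⟩ := hker
    obtain ⟨c, hc⟩ := hu x
    have hc0 : c ≠ 0 := by
      rintro rfl
      exact hx (sub_eq_zero.1 (by simpa using hc.symm))
    set p : Module.End K V := f - a • 1 with hp
    have hpx (y : V) : p y = f y - a • y := by simp [hp]
    have hle : W.map p ≤ W := by
      rintro _ ⟨y, hy, rfl⟩
      rw [hpx]
      exact W.sub_mem (hf y hy) (W.smul_mem a hy)
    have hcu : c • u ∈ W.map p :=
      ⟨g x, hg x hxW, by rw [hpx, hc, hxa, map_smul]⟩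
    have huW : u ∈ W.map p := (Submodule.smul_mem_iff _ hc0).1 hcu
    have hne : W.map p ≠ ⊥ := fun hbot => by
      rw [hbot, Submodule.mem_bot, hc] at hcu
      exact hx (sub_eq_zero.1 hcu)
    have hlt : Module.finrank K (W.map p) < d := by
      have hrank := (p.domRestrict W).finrank_range_add_finrank_ker
      rw [LinearMap.range_domRestrict, h] at hrank
      have hpos : 0 < Module.finrank K (LinearMap.ker (p.domRestrict W)) := by
        refine Module.finrank_pos_iff.2 (Submodule.nontrivial_iff_ne_bot.2 fun hbot => hw0 ?_)
        have hmem : (⟨w, hwW⟩ : W) ∈ LinearMap.ker (p.domRestrict W) := by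
          simp [hpx, hwa]
        rw [hbot, Submodule.mem_bot] at hmem
        exact congrArg Subtype.val hmem
      omega
    obtain ⟨v, hv, hv'⟩ := ih _ hlt (W.map p) hne
      (by
        rintro _ ⟨y, hy, rfl⟩
        exact ⟨f y, hf y hy, by simp [hpx]⟩)
      (by
        rintro _ ⟨y, hy, rfl⟩
        obtain ⟨e, he⟩ := hu y
        have hgy : g (p y) = p (g y) - e • u := by
          rw [he, hpx, hpx, map_sub, map_smul]
          abel
        rw [hgy]
        exact Submodule.sub_mem _ (Submodule.mem_map_of_mem (hg y hy))
          (Submodule.smul_mem _ e huW)) rfl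
    exact ⟨v, hle hv, hv'⟩

/-- A Laffey pair (the commutator `AB − BA` has rank `1`) partially commutes
but does not commute: there is a common eigenvector, while `AB ≠ BA`. -/
theorem stmt13 {n : ℕ} (A B : Matrix (Fin n) (Fin n) ℂ)
    (hLaffey : (A * B - B * A).rank = 1) :
    (∃ v : Fin n → ℂ, v ≠ 0 ∧ ∃ lam mu : ℂ, A.mulVec v = lam • v ∧ B.mulVec v = mu • v) ∧
    A * B ≠ B * A := by
  have hne : A * B ≠ B * A := fun h => by simp [h] at hLaffey
  refine ⟨?_, hne⟩
  have hn : Nonempty (Fin n) := by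
    by_contra hempty
    rw [not_nonempty_iff] at hempty
    exact hne (Subsingleton.elim _ _)
  obtain ⟨u, hu⟩ := finrank_le_one_iff.1 (le_of_eq hLaffey)
  obtain ⟨v, -, hv⟩ := Module.End.exists_common_eigenvector_mem A.mulVecLin B.mulVecLin
    (u : Fin n → ℂ)
    (fun x => by
      obtain ⟨c, hc⟩ := hu ⟨(A * B - B * A).mulVecLin x, LinearMap.mem_range_self _ x⟩
      exact ⟨c, by simpa [Matrix.sub_mulVec] using congrArg Subtype.val hc⟩)
    ⊤ top_ne_bot (fun _ _ => Submodule.mem_top) (fun _ _ => Submodule.mem_top)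
  exact ⟨v, hv⟩
end
end
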